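/- arXiv:2601.15767 — 2 statements merged into one kernel-verified Lean document; each statement's English description precedes it below -/
import Mathlib

section
/- Let n, m, N be positive integers, let M ∈ ℂ^{m×m} be Hermitian positive semidefinite, let R ∈ ℂ^{n×m}, let w_0, …, w_{N−1} > 0, let t'_0, …, t'_{N−1} ∈ [0,1), let B ≥ 0, and let D : ℂ^{n×m} → ℂ^{n×m} be a continuous map satisfying ‖D(H)‖_F ≤ B for all H. Define the inner-loop map T : ℂ^{n×m} → ℂ^{n×m} by T(H_0) = H_N, where H_{i+1} = t'_i · H_0 + (1 − t'_i) · (R + w_i^{−1} D(H_i)) (M + w_i^{−1} I)^{−1} for i = 0, …, N−1. Then T admits at least one fixed point H* = T(H*), and this fixed point lies in the closed Frobenius-norm ball of radius R_limit = max_{0 ≤ i < N} ‖R (M + w_i^{−1} I)^{−1}‖_F + B. -/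
open Matrix
open scoped ComplexOrder

/-- The Frobenius norm of a complex matrix. -/
noncomputable def frobNorm {n m : ℕ} (A : Matrix (Fin n) (Fin m) ℂ) : ℝ :=
  Real.sqrt (∑ i, ∑ j, ‖A i j‖ ^ 2)

/-- The inner loop of the RC-Flow algorithm: starting from the anchor `H0`, it iterates
`H_{i+1} = t'_i • H0 + (1 - t'_i) • (R + w_i⁻¹ • D(H_i)) * (M + w_i⁻¹ • 1)⁻¹`. -/
noncomputable def innerIter {n m : ℕ} (M : Matrix (Fin m) (Fin m) ℂ)
    (R : Matrix (Fin n) (Fin m) ℂ) (w t' : ℕ → ℝ)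
    (D : Matrix (Fin n) (Fin m) ℂ → Matrix (Fin n) (Fin m) ℂ)
    (H0 : Matrix (Fin n) (Fin m) ℂ) : ℕ → Matrix (Fin n) (Fin m) ℂ
  | 0 => H0
  | i + 1 => t' i • H0 +
      (1 - t' i) • ((R + (w i)⁻¹ • D (innerIter M R w t' D H0 i)) * (M + (w i)⁻¹ • 1)⁻¹)

/-!
If the last proximal projection of the loop returns its own anchor, `P (D H_{N-1}) = H_0`, then
`H_N = t' H_0 + (1 - t') H_0 = H_0`. So it suffices to find a fixed point of
`H_0 ↦ P (D H_{N-1})`. This map is continuous, and it takes values in the ball of radius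
`‖R (M + w⁻¹)⁻¹‖ + B` because right multiplication by `w⁻¹ (M + w⁻¹)⁻¹ = (1 + w M)⁻¹` does not
increase the Frobenius norm; Brouwer's theorem applies.

Brouwer's theorem is proved by the Milnor–Rogers volume argument. A smooth map without fixed points
would give a smooth retraction `r` onto a sphere. For small `t ≥ 0` the map `id + t (r - id)` is a
diffeomorphism preserving the ball, so the integral over the ball of its Jacobian, a polynomial in
`t`, is the volume of the ball. At `t = 1` the integrand `det (Dr)` vanishes, since `r` has constant
norm: a contradiction.
-/

open MeasureTheory Metric Function NormedSpace
open scoped NNReal Polynomial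

lemma bijective_id_add_of_contractingWith {E : Type*} [NormedAddCommGroup E] [CompleteSpace E]
    {K : ℝ≥0} {u : E → E} (hu : ContractingWith K u) : Bijective fun x ↦ x + u x := by
  have hcontr (y : E) : ContractingWith K fun x ↦ y - u x :=
    ⟨hu.1, LipschitzWith.of_dist_le_mul fun a b ↦ by
      simpa only [dist_sub_left] using hu.2.dist_le_mul a b⟩
  refine ⟨fun a b hab ↦ (hcontr (a + u a)).fixedPoint_unique' (x := a) (y := b) ?_ ?_, fun y ↦ ?_⟩
  · exact add_sub_cancel_right a (u a)
  · exact sub_eq_iff_eq_add.2 hab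
  · exact ⟨_, (sub_eq_iff_eq_add.1 (hcontr y).fixedPoint_isFixedPt).symm⟩

lemma exists_pos_forall_le_norm_sub_of_hasCompactSupport {E : Type*} [NormedAddCommGroup E]
    [ProperSpace E] {g : E → E} (hg : Continuous g) (hsupp : HasCompactSupport g)
    (hfix : ∀ x, g x ≠ x) : ∃ δ > 0, ∀ x, δ ≤ ‖x - g x‖ := by
  have hcoercive : Filter.Tendsto (fun x ↦ ‖x - g x‖) (Filter.cocompact E) Filter.atTop := by
    refine (tendsto_norm_cocompact_atTop (E := E)).congr' ?_
    filter_upwards [Filter.coclosedCompact_eq_cocompact (X := E) ▸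
      hasCompactSupport_iff_eventuallyEq.1 hsupp] with x hx
    rw [hx, Pi.zero_apply, sub_zero]
  obtain ⟨x₀, hx₀⟩ := (continuous_id.sub hg).norm.exists_forall_le hcoercive
  exact ⟨_, norm_pos_iff.2 (sub_ne_zero.2 (hfix x₀).symm), hx₀⟩

lemma exists_polynomial_eval_eq_integral {α : Type*} [MeasurableSpace α] {μ : Measure α} {d : ℕ}
    {P : α → ℝ[X]} (hdeg : ∀ x, (P x).natDegree ≤ d)
    (hint : ∀ t, Integrable (fun x ↦ (P x).eval t) μ) :
    ∃ Q : ℝ[X], ∀ t, Q.eval t = ∫ x, (P x).eval t ∂μ := by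
  let nodes := Finset.range (d + 1)
  have hnodes : Set.InjOn (Nat.cast : ℕ → ℝ) nodes := Nat.cast_injective.injOn
  have hdeg_lt (x : α) : (P x).degree < nodes.card := by
    rw [Finset.card_range]
    exact Polynomial.degree_lt_iff_coeff_zero _ _ |>.2 fun k hk ↦
      Polynomial.coeff_eq_zero_of_natDegree_lt ((hdeg x).trans_lt hk)
  have hinterp (x : α) (t : ℝ) : (P x).eval t =
      ∑ j ∈ nodes, (P x).eval (j : ℝ) * (Lagrange.basis nodes Nat.cast j).eval t := by
    conv_lhs => rw [Lagrange.eq_interpolate hnodes (hdeg_lt x), Lagrange.interpolate_apply]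
    simp only [Polynomial.eval_finsetSum, Polynomial.eval_mul, Polynomial.eval_C]
  refine ⟨Lagrange.interpolate nodes Nat.cast fun j ↦ ∫ x, (P x).eval (j : ℝ) ∂μ, fun t ↦ ?_⟩
  simp only [hinterp _ t, Lagrange.interpolate_apply, Polynomial.eval_finsetSum,
    Polynomial.eval_mul, Polynomial.eval_C]
  rw [integral_finsetSum]
  · simp only [integral_mul_const]
  · exact fun j _ ↦ (hint j).mul_const _

section NormedSpace

variable {E : Type*} [NormedAddCommGroup E] [NormedSpace ℝ E]

lemma lipschitzOnWith_normalize {δ : ℝ≥0} (hδ : 0 < δ) :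
    LipschitzOnWith (2 / δ) (normalize : E → E) {x | δ ≤ ‖x‖} := by
  refine LipschitzOnWith.of_dist_le_mul fun a ha b hb ↦ ?_
  have ha_pos : 0 < ‖a‖ := (NNReal.coe_pos.2 hδ).trans_le ha
  have hb_pos : 0 < ‖b‖ := (NNReal.coe_pos.2 hδ).trans_le hb
  have hsplit : normalize a - normalize b =
      ‖a‖⁻¹ • ((a - b) + (‖b‖ - ‖a‖) • normalize b) := by
    rw [sub_smul, norm_smul_normalize, sub_add_sub_cancel, smul_sub, smul_smul,
      inv_mul_cancel₀ ha_pos.ne', one_smul, NormedSpace.normalize]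
  have hnorm : ‖(a - b) + (‖b‖ - ‖a‖) • normalize b‖ ≤ 2 * ‖a - b‖ :=
    calc _ ≤ ‖a - b‖ + |‖b‖ - ‖a‖| := by
          simpa [norm_smul, norm_normalize (norm_pos_iff.1 hb_pos)] using
            norm_add_le (a - b) ((‖b‖ - ‖a‖) • normalize b)
      _ ≤ 2 * ‖a - b‖ := by linarith [abs_norm_sub_norm_le b a, norm_sub_rev b a]
  calc dist (normalize a) (normalize b)
      = ‖a‖⁻¹ * ‖(a - b) + (‖b‖ - ‖a‖) • normalize b‖ := by
        rw [dist_eq_norm, hsplit, norm_smul, norm_inv, norm_norm]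
    _ ≤ (δ : ℝ)⁻¹ * (2 * ‖a - b‖) := by gcongr; exact ha
    _ = (2 / δ : ℝ≥0) * dist a b := by rw [dist_eq_norm]; push_cast; ring

/-- A retraction of `E` onto the sphere of radius `ρ` about the origin that is the radial projection
outside the ball. It is defined on all of `E`, rather than on the ball, so that small perturbations
of the identity in the direction of `r` are bijections of `E`. -/
structure IsRadialSphereRetraction (ρ : ℝ) (r : E → E) : Prop where
  norm_eq : ∀ x, ‖r x‖ = ρ
  eq_of_le_norm : ∀ x, ρ ≤ ‖x‖ → r x = ρ • normalize x

lemma IsRadialSphereRetraction.image_closedBall {ρ t : ℝ} {r : E → E}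
    (hr : IsRadialSphereRetraction ρ r) (ht0 : 0 ≤ t) (ht1 : t < 1)
    (hsurj : Surjective fun x ↦ x + t • (r x - x)) :
    (fun x ↦ x + t • (r x - x)) '' closedBall 0 ρ = closedBall 0 ρ := by
  refine Set.Subset.antisymm (Set.image_subset_iff.2 fun x hx ↦ ?_) fun y hy ↦ ?_
  · exact (convex_closedBall 0 ρ).add_smul_sub_mem hx
      (mem_closedBall_zero_iff.2 (hr.norm_eq x).le) ⟨ht0, ht1.le⟩
  obtain ⟨x, rfl⟩ := hsurj y
  refine Set.mem_image_of_mem _ (mem_closedBall_zero_iff.2 ?_)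
  by_contra! hx
  have hρ : 0 ≤ ρ := hr.norm_eq x ▸ norm_nonneg _
  have hradial : x + t • (r x - x) = ((1 - t) * ‖x‖ + t * ρ) • normalize x := by
    calc x + t • (r x - x) = (1 - t) • (‖x‖ • normalize x) + (t * ρ) • normalize x := by
          rw [hr.eq_of_le_norm x hx.le, norm_smul_normalize]; module
      _ = ((1 - t) * ‖x‖ + t * ρ) • normalize x := by module
  have hnorm : ‖x + t • (r x - x)‖ = (1 - t) * ‖x‖ + t * ρ := by
    rw [hradial, norm_smul, norm_normalize (norm_pos_iff.1 (hρ.trans_lt hx)), mul_one,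
      Real.norm_of_nonneg (by nlinarith [norm_nonneg x])]
  nlinarith [hnorm.symm.trans_le (mem_closedBall_zero_iff.1 hy)]

section FiniteDimensional

variable [FiniteDimensional ℝ E]

lemma det_one_add_ne_zero_of_norm_lt_one {A : E →L[ℝ] E} (hA : ‖A‖ < 1) :
    (1 + A).det ≠ 0 := by
  have hunit : IsUnit (1 + A) := by
    simpa only [sub_neg_eq_add] using isUnit_one_sub_of_norm_lt_one (x := -A) (by rwa [norm_neg])
  exact ((hunit.map ContinuousLinearMap.toLinearMapRingHom).map LinearMap.det).ne_zero

lemma det_one_add_pos_of_norm_lt_one {A : E →L[ℝ] E} (hA : ‖A‖ < 1) : 0 < (1 + A).det := by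
  by_contra! hneg
  have hcont : Continuous fun s : ℝ ↦ (1 + s • A).det :=
    (ContinuousLinearMap.continuous_det (𝕜 := ℝ) (E := E)).comp (by fun_prop)
  have hzero : (0 : ℝ) ∈ Set.Icc (1 + (1 : ℝ) • A).det (1 + (0 : ℝ) • A).det := by
    simpa [ContinuousLinearMap.det] using hneg
  obtain ⟨s, ⟨hs0, hs1⟩, hs⟩ := intermediate_value_Icc' zero_le_one hcont.continuousOn hzero
  refine det_one_add_ne_zero_of_norm_lt_one ?_ hs
  calc ‖s • A‖ = s * ‖A‖ := by rw [norm_smul, Real.norm_of_nonneg hs0]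
    _ ≤ ‖A‖ := mul_le_of_le_one_left (norm_nonneg A) hs1
    _ < 1 := hA

lemma exists_polynomial_eval_eq_det_one_add_smul (A : E →L[ℝ] E) :
    ∃ P : ℝ[X], P.natDegree ≤ Module.finrank ℝ E ∧ ∀ t : ℝ, P.eval t = (1 + t • A).det := by
  let b := Module.finBasis ℝ E
  let A' := LinearMap.toMatrix b b (A : E →ₗ[ℝ] E)
  refine ⟨_, (Polynomial.natDegree_det_X_add_C_le A' 1).trans_eq (Fintype.card_fin _),
    fun t ↦ ?_⟩
  rw [ContinuousLinearMap.det, ← LinearMap.det_toMatrix b, ← Polynomial.coe_evalRingHom,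
    RingHom.map_det]
  congr 1
  ext i j
  have hone : Polynomial.eval t ((1 : Matrix _ _ ℝ[X]) i j) = (1 : Matrix _ _ ℝ) i j := by
    rw [Matrix.one_apply, Matrix.one_apply, apply_ite (Polynomial.eval t), Polynomial.eval_one,
      Polynomial.eval_zero]
  simp [A', hone, LinearMap.toMatrix_one, add_comm, mul_comm t]

lemma setIntegral_det_one_add_fderiv_eq_measureReal_image [MeasurableSpace E] [BorelSpace E]
    (μ : Measure E) [μ.IsAddHaarMeasure] {K : ℝ≥0} {u : E → E} (hu : ContractingWith K u)
    (hdiff : Differentiable ℝ u) {s : Set E} (hs : MeasurableSet s) :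
    ∫ x in s, (1 + fderiv ℝ u x).det ∂μ = μ.real ((fun x ↦ x + u x) '' s) := by
  have hpos (x : E) : 0 < (1 + fderiv ℝ u x).det :=
    det_one_add_pos_of_norm_lt_one
      ((norm_fderiv_le_of_lipschitz ℝ hu.2).trans_lt (NNReal.coe_lt_one.2 hu.1))
  have hderiv (x : E) : HasFDerivAt (fun y ↦ y + u y) (1 + fderiv ℝ u x) x :=
    (hasFDerivAt_id x).add (hdiff x).hasFDerivAt
  have hchange := integral_image_eq_integral_abs_det_fderiv_smul μ hs
    (fun x _ ↦ (hderiv x).hasFDerivWithinAt)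
    (bijective_id_add_of_contractingWith hu).injective.injOn (fun _ ↦ (1 : ℝ))
  simpa only [abs_of_pos (hpos _), smul_eq_mul, mul_one, setIntegral_const] using hchange.symm

lemma IsRadialSphereRetraction.setIntegral_det_eq_measureReal_closedBall [MeasurableSpace E]
    [BorelSpace E] (μ : Measure E) [μ.IsAddHaarMeasure] {ρ t : ℝ} {K : ℝ≥0} {r : E → E}
    (hr : IsRadialSphereRetraction ρ r) (hdiff : Differentiable ℝ r)
    (hlip : LipschitzWith K fun x ↦ r x - x) (ht0 : 0 ≤ t) (ht1 : t < 1) (htK : t * K < 1) :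
    ∫ x in closedBall 0 ρ, (1 + t • fderiv ℝ (fun y ↦ r y - y) x).det ∂μ =
      μ.real (closedBall 0 ρ) := by
  have hdisp : Differentiable ℝ fun x ↦ r x - x := hdiff.sub differentiable_id
  have hcontr : ContractingWith (‖t‖₊ * K) fun x ↦ t • (r x - x) := by
    refine ⟨?_, (lipschitzWith_smul t).comp hlip⟩
    rw [← NNReal.coe_lt_one, NNReal.coe_mul, coe_nnnorm, Real.norm_of_nonneg ht0]
    exact htK
  have hvol := setIntegral_det_one_add_fderiv_eq_measureReal_image μ hcontr
    (hdisp.const_smul t) (measurableSet_closedBall (x := (0 : E)) (ε := ρ))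
  rw [hr.image_closedBall ht0 ht1 (bijective_id_add_of_contractingWith hcontr).surjective] at hvol
  simpa only [fderiv_fun_const_smul (hdisp _)] using hvol

end FiniteDimensional

end NormedSpace

section InnerProductSpace

variable {E : Type*} [NormedAddCommGroup E] [InnerProductSpace ℝ E] [FiniteDimensional ℝ E]

lemma det_fderiv_eq_zero_of_norm_eq {ρ : ℝ} (hρ : ρ ≠ 0) {r : E → E} (hr : ∀ x, ‖r x‖ = ρ)
    {x : E} (hdiff : DifferentiableAt ℝ r x) : (fderiv ℝ r x).det = 0 := by
  have horth (v : E) : inner ℝ (r x) (fderiv ℝ r x v) = 0 := by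
    have hderiv := hdiff.hasFDerivAt.norm_sq
    simp only [hr] at hderiv
    simpa using DFunLike.congr_fun (hderiv.unique (hasFDerivAt_const _ x)) v
  by_contra hdet
  obtain ⟨v, hv⟩ : ∃ v, fderiv ℝ r x v = r x :=
    ((Module.End.isUnit_iff _).1
      ((LinearMap.isUnit_iff_isUnit_det _).2 (isUnit_iff_ne_zero.2 hdet))).surjective (r x)
  refine hρ ?_
  rw [← hr x, norm_eq_zero, ← inner_self_eq_zero (𝕜 := ℝ), ← horth v, hv]

theorem not_isRadialSphereRetraction_of_contDiff_of_lipschitzWith {ρ : ℝ} (hρ : 0 < ρ) {K : ℝ≥0}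
    {r : E → E} (hdiff : ContDiff ℝ 1 r) (hlip : LipschitzWith K r) :
    ¬ IsRadialSphereRetraction ρ r := by
  intro hr
  borelize E
  have hdisp : ContDiff ℝ 1 fun x ↦ r x - x := hdiff.sub contDiff_id
  choose P hdeg heval using fun x ↦
    exists_polynomial_eval_eq_det_one_add_smul (fderiv ℝ (fun y ↦ r y - y) x)
  have hcont (t : ℝ) : Continuous fun x ↦ (P x).eval t := by
    have := hdisp.continuous_fderiv one_ne_zero
    simp only [heval]
    exact (ContinuousLinearMap.continuous_det (𝕜 := ℝ) (E := E)).comp (by fun_prop)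
  obtain ⟨Q, hQ⟩ := exists_polynomial_eval_eq_integral hdeg fun t ↦
    (hcont t).continuousOn.integrableOn_compact (μ := volume) (isCompact_closedBall (0 : E) ρ)
  have hQ_small : ∀ t ∈ Set.Ico (0 : ℝ) (K + 1)⁻¹,
      Q.eval t = (volume : Measure E).real (closedBall 0 ρ) := by
    rintro t ⟨ht0, ht⟩
    have htK : t * (K + 1) < 1 := (lt_inv_mul_iff₀' (by positivity)).1 (by rwa [mul_one])
    simp only [hQ, heval]
    exact hr.setIntegral_det_eq_measureReal_closedBall volume (hdiff.differentiable one_ne_zero)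
      (hlip.sub LipschitzWith.id) ht0 (by nlinarith [K.coe_nonneg]) htK
  have hQ_const : Q = Polynomial.C ((volume : Measure E).real (closedBall 0 ρ)) :=
    Polynomial.eq_of_infinite_eval_eq _ _ <|
      (Set.Ico_infinite (show (0 : ℝ) < (K + 1)⁻¹ by positivity)).mono fun t ht ↦ by
        simpa only [Set.mem_ofPred_eq, Polynomial.eval_C] using hQ_small t ht
  have hQ_one : Q.eval 1 = 0 := by
    have hdet (x : E) : (1 + (1 : ℝ) • fderiv ℝ (fun y ↦ r y - y) x).det = 0 := by
      have hx : DifferentiableAt ℝ r x := hdiff.differentiable one_ne_zero x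
      rw [← det_fderiv_eq_zero_of_norm_eq hρ.ne' hr.norm_eq hx, one_smul,
        fderiv_fun_sub hx differentiableAt_fun_id, fderiv_fun_id, ← ContinuousLinearMap.one_def,
        add_sub_cancel]
    simp only [hQ, heval, hdet, integral_zero]
  have hvol : 0 < (volume : Measure E).real (closedBall 0 ρ) :=
    ENNReal.toReal_pos (measure_closedBall_pos volume 0 hρ).ne' measure_closedBall_lt_top.ne
  rw [hQ_const, Polynomial.eval_C] at hQ_one
  exact hvol.ne' hQ_one

theorem exists_isFixedPt_of_contDiff_hasCompactSupport {g : E → E} (hg : ContDiff ℝ 1 g)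
    (hsupp : HasCompactSupport g) : ∃ x, IsFixedPt g x := by
  by_contra! hfix
  obtain ⟨δ, hδ, hδ_le⟩ :=
    exists_pos_forall_le_norm_sub_of_hasCompactSupport hg.continuous hsupp hfix
  lift δ to ℝ≥0 using hδ.le
  obtain ⟨ρ, hρ, hball⟩ := hsupp.isCompact.isBounded.subset_ball_lt 0 0
  have hg_zero (x : E) (hx : ρ ≤ ‖x‖) : g x = 0 :=
    image_eq_zero_of_notMem_tsupport fun hmem ↦ (mem_ball_zero_iff.1 (hball hmem)).not_ge hx
  have hne (x : E) : x - g x ≠ 0 := sub_ne_zero.2 (Ne.symm (hfix x))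
  obtain ⟨K, hK⟩ := hg.lipschitzWith_of_hasCompactSupport hsupp one_ne_zero
  have hlip : LipschitzWith (‖ρ‖₊ * (2 / δ * (1 + K))) fun x ↦ ρ • normalize (x - g x) :=
    (lipschitzWith_smul ρ).comp <| lipschitzOnWith_univ.1 <|
      (lipschitzOnWith_normalize hδ).comp (LipschitzWith.id.sub hK).lipschitzOnWith
        fun x _ ↦ hδ_le x
  have hsmooth : ContDiff ℝ 1 fun x ↦ ρ • normalize (x - g x) := by
    have hdisp : ContDiff ℝ 1 fun x ↦ x - g x := contDiff_id.sub hg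
    exact (((hdisp.norm ℝ hne).inv fun x ↦ norm_ne_zero_iff.2 (hne x)).smul hdisp).const_smul ρ
  refine not_isRadialSphereRetraction_of_contDiff_of_lipschitzWith hρ hsmooth hlip
    ⟨fun x ↦ ?_, fun x hx ↦ ?_⟩
  · rw [norm_smul, norm_normalize (hne x), mul_one, Real.norm_of_nonneg hρ.le]
  · rw [hg_zero x hx, sub_zero]

theorem exists_isFixedPt_of_continuous_hasCompactSupport {g : E → E} (hg : Continuous g)
    (hsupp : HasCompactSupport g) : ∃ x, IsFixedPt g x := by
  by_contra! hfix
  obtain ⟨δ, hδ, hδ_le⟩ := exists_pos_forall_le_norm_sub_of_hasCompactSupport hg hsupp hfix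
  obtain ⟨f, hf, hfg, hfsupp⟩ := hg.exists_contDiff_approx 1 continuous_const fun _ ↦ hδ
  obtain ⟨x, hx⟩ := exists_isFixedPt_of_contDiff_hasCompactSupport hf (hsupp.mono hfsupp)
  refine (hδ_le x).not_gt ?_
  simpa only [hx.eq, dist_eq_norm] using hfg x

end InnerProductSpace

theorem exists_isFixedPt_of_continuous_isBounded_range {E : Type*} [NormedAddCommGroup E]
    [NormedSpace ℝ E] [FiniteDimensional ℝ E] {f : E → E} (hf : Continuous f)
    (hbdd : Bornology.IsBounded (Set.range f)) : ∃ x, IsFixedPt f x := by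
  obtain ⟨ρ, hρ⟩ := hbdd.subset_closedBall 0
  obtain ⟨χ, hχ_one, -, hχ_supp, hχ_mem⟩ := exists_continuous_one_zero_of_isCompact
    (isCompact_closedBall (0 : E) ρ) isClosed_empty (Set.disjoint_empty _)
  let e := toEuclidean (E := E)
  obtain ⟨y, hy⟩ := exists_isFixedPt_of_continuous_hasCompactSupport
    (g := fun y ↦ e (χ (e.symm y) • f (e.symm y))) (by fun_prop)
    (((hχ_supp.smul_right (f' := f)).comp_homeomorph e.symm.toHomeomorph).comp_left (map_zero e))
  have hx : χ (e.symm y) • f (e.symm y) = e.symm y := e.injective (hy.eq.trans (by simp))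
  have hnorm : ‖e.symm y‖ ≤ ρ :=
    calc ‖e.symm y‖ = χ (e.symm y) * ‖f (e.symm y)‖ := by
          rw [← Real.norm_of_nonneg (hχ_mem (e.symm y)).1, ← norm_smul, hx]
      _ ≤ ‖f (e.symm y)‖ := mul_le_of_le_one_left (norm_nonneg _) (hχ_mem _).2
      _ ≤ ρ := mem_closedBall_zero_iff.1 (hρ (Set.mem_range_self _))
  refine ⟨e.symm y, ?_⟩
  rwa [hχ_one (mem_closedBall_zero_iff.2 hnorm), Pi.one_apply, one_smul] at hx

section ProxProj

variable {𝕜 m n : Type*} [RCLike 𝕜] [Fintype m] [DecidableEq m]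

/-- The physics-aware proximal projection of `X` with system matrix `M`, data matrix `R` and
weight `w`; each step of `innerIter` applies it to the denoised iterate. -/
noncomputable def proxProj (M : Matrix m m 𝕜) (R : Matrix n m 𝕜) (w : ℝ) (X : Matrix n m 𝕜) :
    Matrix n m 𝕜 :=
  (R + w⁻¹ • X) * (M + w⁻¹ • 1)⁻¹

lemma continuous_proxProj (M : Matrix m m 𝕜) (R : Matrix n m 𝕜) (w : ℝ) :
    Continuous (proxProj M R w) := by
  unfold proxProj
  fun_prop

end ProxProj

section Frobenius

open scoped Matrix.Norms.Frobenius

variable {𝕜 m n : Type*} [RCLike 𝕜] [Fintype m] [Fintype n]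

lemma frobenius_norm_eq_sqrt (A : Matrix n m 𝕜) : ‖A‖ = √(∑ i, ∑ j, ‖A i j‖ ^ 2) := by
  simp only [frobenius_norm_def, Real.sqrt_eq_rpow, Real.rpow_two]

lemma frobenius_norm_sq_eq_re_trace (A : Matrix n m 𝕜) :
    ‖A‖ ^ 2 = RCLike.re (A * Aᴴ).trace := by
  rw [frobenius_norm_eq_sqrt, Real.sq_sqrt (by positivity)]
  simp only [trace, diag, mul_apply, conjTranspose_apply, map_sum, RCLike.star_def,
    RCLike.mul_conj, ← RCLike.ofReal_pow, RCLike.ofReal_re]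

variable [DecidableEq m]

lemma frobenius_norm_le_norm_mul_one_add {N : Matrix m m 𝕜} (hN : N.PosSemidef)
    (Y : Matrix n m 𝕜) : ‖Y‖ ≤ ‖Y * (1 + N)‖ := by
  have hpos : (N + N + N * Nᴴ).PosSemidef :=
    (hN.add hN).add (posSemidef_self_mul_conjTranspose N)
  have hexpand : (Y * (1 + N)) * (Y * (1 + N))ᴴ = Y * Yᴴ + Y * (N + N + N * Nᴴ) * Yᴴ := by
    simp only [conjTranspose_mul, conjTranspose_add, conjTranspose_one, hN.isHermitian.eq]
    simp only [Matrix.mul_add, Matrix.add_mul, Matrix.mul_one, Matrix.one_mul, Matrix.mul_assoc]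
    abel
  refine le_of_sq_le_sq ?_ (norm_nonneg _)
  rw [frobenius_norm_sq_eq_re_trace, frobenius_norm_sq_eq_re_trace, hexpand, trace_add, map_add]
  exact le_add_of_nonneg_right
    (RCLike.nonneg_iff.1 (hpos.mul_mul_conjTranspose_same Y).trace_nonneg).1

lemma frobenius_norm_inv_smul_mul_inv_le {M : Matrix m m 𝕜} (hM : M.PosSemidef) {w : ℝ}
    (hw : 0 < w) (A : Matrix n m 𝕜) : ‖w⁻¹ • A * (M + w⁻¹ • 1)⁻¹‖ ≤ ‖A‖ := by
  have hunit : IsUnit (M + w⁻¹ • (1 : Matrix m m 𝕜)).det :=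
    (isUnit_iff_isUnit_det _).1 (PosDef.posSemidef_add hM (PosDef.one.smul (inv_pos.2 hw))).isUnit
  have hfactor : (1 : Matrix m m 𝕜) + w • M = w • (M + w⁻¹ • 1) := by
    rw [smul_add, smul_inv_smul₀ hw.ne', add_comm]
  calc ‖w⁻¹ • A * (M + w⁻¹ • 1)⁻¹‖
      ≤ ‖w⁻¹ • A * (M + w⁻¹ • 1)⁻¹ * (1 + w • M)‖ :=
        frobenius_norm_le_norm_mul_one_add (hM.smul hw.le) _
    _ = ‖A‖ := by
        rw [hfactor, Matrix.mul_smul, Matrix.nonsing_inv_mul_cancel_right _ _ hunit,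
          smul_inv_smul₀ hw.ne']

lemma frobenius_norm_proxProj_le {M : Matrix m m 𝕜} (hM : M.PosSemidef) (R : Matrix n m 𝕜)
    {w : ℝ} (hw : 0 < w) (X : Matrix n m 𝕜) :
    ‖proxProj M R w X‖ ≤ ‖R * (M + w⁻¹ • 1)⁻¹‖ + ‖X‖ := by
  rw [proxProj, Matrix.add_mul]
  exact norm_add_le_of_le le_rfl (frobenius_norm_inv_smul_mul_inv_le hM hw X)

end Frobenius

section InnerLoop

variable {n m : ℕ}

section FrobNorm

open scoped Matrix.Norms.Frobenius

lemma frobNorm_eq_norm (A : Matrix (Fin n) (Fin m) ℂ) : frobNorm A = ‖A‖ :=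
  (frobenius_norm_eq_sqrt A).symm

lemma exists_isFixedPt_of_continuous_of_frobNorm_le
    {F : Matrix (Fin n) (Fin m) ℂ → Matrix (Fin n) (Fin m) ℂ} (hF : Continuous F) {C : ℝ}
    (hC : ∀ X, frobNorm (F X) ≤ C) : ∃ X, IsFixedPt F X :=
  exists_isFixedPt_of_continuous_isBounded_range hF <|
    isBounded_iff_forall_norm_le.2
      ⟨C, Set.forall_mem_range.2 fun X ↦ frobNorm_eq_norm (F X) ▸ hC X⟩

lemma frobNorm_proxProj_le {M : Matrix (Fin m) (Fin m) ℂ} (hM : M.PosSemidef)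
    (R : Matrix (Fin n) (Fin m) ℂ) {w : ℝ} (hw : 0 < w) (X : Matrix (Fin n) (Fin m) ℂ) :
    frobNorm (proxProj M R w X) ≤ frobNorm (R * (M + w⁻¹ • 1)⁻¹) + frobNorm X := by
  simpa only [frobNorm_eq_norm] using frobenius_norm_proxProj_le hM R hw X

end FrobNorm

variable (M : Matrix (Fin m) (Fin m) ℂ) (R : Matrix (Fin n) (Fin m) ℂ) (w t' : ℕ → ℝ)
  {D : Matrix (Fin n) (Fin m) ℂ → Matrix (Fin n) (Fin m) ℂ}

lemma continuous_innerIter (hD : Continuous D) (i : ℕ) :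
    Continuous fun H ↦ innerIter M R w t' D H i := by
  induction i with
  | zero => exact continuous_id
  | succ i ih =>
    exact (continuous_const_smul (t' i)).add
      (((continuous_proxProj M R (w i)).comp (hD.comp ih)).const_smul (1 - t' i))

lemma innerIter_succ_eq_self_of_proxProj_eq {H : Matrix (Fin n) (Fin m) ℂ} {i : ℕ}
    (hH : proxProj M R (w i) (D (innerIter M R w t' D H i)) = H) :
    innerIter M R w t' D H (i + 1) = H :=
  calc innerIter M R w t' D H (i + 1)
      = t' i • H + (1 - t' i) • proxProj M R (w i) (D (innerIter M R w t' D H i)) := rfl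
    _ = H := by rw [hH]; module

end InnerLoop

theorem rcflow_fixed_point_existence_general {n m : ℕ} {M : Matrix (Fin m) (Fin m) ℂ}
    (hM : M.PosSemidef) (R : Matrix (Fin n) (Fin m) ℂ) (w t' : ℕ → ℝ) {k : ℕ} (hw : 0 < w k)
    {B : ℝ} {D : Matrix (Fin n) (Fin m) ℂ → Matrix (Fin n) (Fin m) ℂ} (hDcont : Continuous D)
    (hDbdd : ∀ H, frobNorm (D H) ≤ B) :
    ∃ H : Matrix (Fin n) (Fin m) ℂ, innerIter M R w t' D H (k + 1) = H ∧
      frobNorm H ≤ frobNorm (R * (M + (w k)⁻¹ • 1)⁻¹) + B := by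
  let F H := proxProj M R (w k) (D (innerIter M R w t' D H k))
  have hFcont : Continuous F :=
    (continuous_proxProj M R (w k)).comp (hDcont.comp (continuous_innerIter M R w t' hDcont k))
  have hFbdd (H) : frobNorm (F H) ≤ frobNorm (R * (M + (w k)⁻¹ • 1)⁻¹) + B :=
    (frobNorm_proxProj_le hM R hw _).trans (by gcongr; exact hDbdd _)
  obtain ⟨H, hH⟩ := exists_isFixedPt_of_continuous_of_frobNorm_le hFcont hFbdd
  exact ⟨H, innerIter_succ_eq_self_of_proxProj_eq M R w t' hH, hH.eq ▸ hFbdd H⟩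

/-- **Existence of a fixed point of the inner-loop map.**  Under the bounded-denoiser
hypothesis, the inner-loop map `T : H0 ↦ H_N` admits at least one fixed point, lying in the
closed Frobenius ball of radius `R_limit = max_i ‖R (M + w_i⁻¹ I)⁻¹‖_F + B`. -/
theorem rcflow_fixed_point_existence {n m N : ℕ} (hn : 0 < n) (hm : 0 < m) (hN : 0 < N)
    (M : Matrix (Fin m) (Fin m) ℂ) (hM : M.PosSemidef)
    (R : Matrix (Fin n) (Fin m) ℂ)
    (w t' : ℕ → ℝ) (hw : ∀ i < N, 0 < w i) (ht' : ∀ i < N, t' i ∈ Set.Ico (0 : ℝ) 1)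
    (B : ℝ) (hB : 0 ≤ B)
    (D : Matrix (Fin n) (Fin m) ℂ → Matrix (Fin n) (Fin m) ℂ)
    (hDcont : Continuous D) (hDbdd : ∀ H, frobNorm (D H) ≤ B) :
    ∃ Hstar : Matrix (Fin n) (Fin m) ℂ,
      innerIter M R w t' D Hstar N = Hstar ∧
      frobNorm Hstar ≤
        ((Finset.range N).sup' (Finset.nonempty_range_iff.mpr hN.ne')
          fun i => frobNorm (R * (M + (w i)⁻¹ • 1)⁻¹)) + B := by
  obtain ⟨k, rfl⟩ := Nat.exists_eq_succ_of_ne_zero hN.ne'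
  obtain ⟨H, hfix, hH⟩ :=
    rcflow_fixed_point_existence_general hM R w t' (hw k k.lt_succ_self) hDcont hDbdd
  exact ⟨H, hfix, hH.trans (add_le_add_left
    (Finset.le_sup' (fun i => frobNorm (R * (M + (w i)⁻¹ • 1)⁻¹)) (Finset.self_mem_range_succ k))
    B)⟩
end

section
/- (Linear convergence of the recursive iteration for affine inner-loop dynamics.) Let E = ℂ^d, let N be a positive integer, let T_0, …, T_{N−1} : E → E be linear maps with operator norms ‖T_n‖ ≤ γ for some γ ∈ [0,1), let b_0, …, b_{N−1} ∈ E, and let t_0, …, t_{N−1} ∈ [0,1). Define G : E → E by G(x) = x_N, where x_0 = x and x_{i+1} = t_i x + (1 − t_i)(T_i x_i + b_i) for i = 0, …, N−1. Then G is Lipschitz with some constant c < 1; consequently G has a unique fixed point x*, and for every x ∈ E the recursive iterates satisfy ‖G^{(k)}(x) − x*‖ ≤ c^k ‖x − x*‖ for all k ≥ 0, i.e., the recursion converges linearly to x* from any initialization. -/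
/-- The affine inner-loop recursion with anchor `x`:
`x_0 = x`, `x_{i+1} = t_i • x + (1 − t_i) • (T_i x_i + b_i)`. -/
noncomputable def affIter {d : ℕ}
    (T : ℕ → EuclideanSpace ℂ (Fin d) →L[ℂ] EuclideanSpace ℂ (Fin d))
    (b : ℕ → EuclideanSpace ℂ (Fin d)) (t : ℕ → ℝ)
    (x : EuclideanSpace ℂ (Fin d)) : ℕ → EuclideanSpace ℂ (Fin d)
  | 0 => x
  | i + 1 => t i • x + (1 - t i) • (T i (affIter T b t x i) + b i)

/-!
Averaging with the anchor, `f ↦ (x ↦ s x + (1 - s) f(x))`, keeps nonexpansive maps nonexpansive for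
`s ∈ [0, 1]` and contractions contracting for `s ∈ [0, 1)`. The inner loop alternates this operation
with composition by the nonexpansive maps `F_i`, so if some `F_m` is a contraction and `t_i < 1` for
all `i ≥ m`, the whole loop is a contraction and Banach's fixed point theorem applies.
-/

open Set Function
open scoped NNReal

theorem dist_iterate_le_of_isFixedPt {X : Type*} [PseudoMetricSpace X] {K : ℝ≥0} {f : X → X}
    (hf : LipschitzWith K f) {p : X} (hp : IsFixedPt f p) (x : X) (k : ℕ) :
    dist (f^[k] x) p ≤ K ^ k * dist x p := by
  simpa only [(hp.iterate k).eq, NNReal.coe_pow] using (hf.iterate k).dist_le_mul x p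

theorem nnnorm_add_nnnorm_one_sub {s : ℝ} (hs : s ∈ Icc (0 : ℝ) 1) : ‖s‖₊ + ‖1 - s‖₊ = 1 := by
  ext
  simp [abs_of_nonneg hs.1, abs_of_nonneg (sub_nonneg.2 hs.2)]

theorem nnnorm_add_nnnorm_one_sub_mul_lt_one {s : ℝ} (hs : s ∈ Ico (0 : ℝ) 1) {K : ℝ≥0}
    (hK : K < 1) : ‖s‖₊ + ‖1 - s‖₊ * K < 1 := by
  have hpos : 0 < ‖1 - s‖₊ := nnnorm_pos.2 (sub_pos.2 hs.2).ne'
  calc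
    ‖s‖₊ + ‖1 - s‖₊ * K < ‖s‖₊ + ‖1 - s‖₊ := by gcongr; exact mul_lt_of_lt_one_right hpos hK
    _ = 1 := nnnorm_add_nnnorm_one_sub (Ico_subset_Icc_self hs)

section AnchoredIteration

variable {E : Type*} [NormedAddCommGroup E] [NormedSpace ℝ E]

theorem lipschitzWith_smul_add_smul (s : ℝ) {K : ℝ≥0} {f : E → E} (hf : LipschitzWith K f) :
    LipschitzWith (‖s‖₊ + ‖1 - s‖₊ * K) fun x => s • x + (1 - s) • f x :=
  (lipschitzWith_smul s).add ((lipschitzWith_smul (1 - s)).comp hf)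

theorem lipschitzWith_one_smul_add_smul {s : ℝ} (hs : s ∈ Icc (0 : ℝ) 1) {f : E → E}
    (hf : LipschitzWith 1 f) : LipschitzWith 1 fun x => s • x + (1 - s) • f x := by
  simpa only [mul_one, nnnorm_add_nnnorm_one_sub hs] using lipschitzWith_smul_add_smul s hf

theorem contractingWith_smul_add_smul {s : ℝ} (hs : s ∈ Ico (0 : ℝ) 1) {K : ℝ≥0} {f : E → E}
    (hf : ContractingWith K f) :
    ContractingWith (‖s‖₊ + ‖1 - s‖₊ * K) fun x => s • x + (1 - s) • f x :=
  ⟨nnnorm_add_nnnorm_one_sub_mul_lt_one hs hf.1, lipschitzWith_smul_add_smul s hf.2⟩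

/-- The inner loop anchored at `x`, for arbitrary self-maps `F i` of a real normed space:
`x_0 = x` and `x_{i+1} = t_i x + (1 - t_i) F_i(x_i)`. The affine recursion `affIter` is the case
`F_i = T_i + b_i`. -/
noncomputable def anchoredIter (F : ℕ → E → E) (t : ℕ → ℝ) (x : E) : ℕ → E
  | 0 => x
  | i + 1 => t i • x + (1 - t i) • F i (anchoredIter F t x i)

variable {F : ℕ → E → E} {t : ℕ → ℝ} {m N : ℕ} {γ : ℝ≥0}

theorem lipschitzWith_one_anchoredIter (ht : ∀ n < N, t n ∈ Icc (0 : ℝ) 1)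
    (hF : ∀ n < N, LipschitzWith 1 (F n)) : LipschitzWith 1 (anchoredIter F t · N) := by
  induction N with
  | zero => exact LipschitzWith.id
  | succ n ih =>
    have hprev : LipschitzWith 1 (anchoredIter F t · n) :=
      ih (fun k hk => ht k (hk.trans n.lt_succ_self)) fun k hk => hF k (hk.trans n.lt_succ_self)
    have hcomp : LipschitzWith 1 (F n ∘ (anchoredIter F t · n)) := by
      simpa only [mul_one] using (hF n n.lt_succ_self).comp hprev
    exact lipschitzWith_one_smul_add_smul (ht n n.lt_succ_self) hcomp

theorem exists_contractingWith_anchoredIter (hmN : m < N) (ht : ∀ n < N, t n ∈ Icc (0 : ℝ) 1)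
    (ht_lt : ∀ n < N, m ≤ n → t n < 1) (hF : ∀ n < N, LipschitzWith 1 (F n))
    (hFm : ContractingWith γ (F m)) : ∃ c, ContractingWith c (anchoredIter F t · N) := by
  induction N, hmN using Nat.le_induction with
  | base =>
    have hprev : LipschitzWith 1 (anchoredIter F t · m) :=
      lipschitzWith_one_anchoredIter (fun k hk => ht k (hk.trans m.lt_succ_self))
        fun k hk => hF k (hk.trans m.lt_succ_self)
    have hcomp : ContractingWith γ (F m ∘ (anchoredIter F t · m)) :=
      ⟨hFm.1, by simpa only [mul_one] using hFm.2.comp hprev⟩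
    exact ⟨_, contractingWith_smul_add_smul
      ⟨(ht m m.lt_succ_self).1, ht_lt m m.lt_succ_self le_rfl⟩ hcomp⟩
  | succ n hmn ih =>
    obtain ⟨c, hprev⟩ := ih (fun k hk => ht k (hk.trans n.lt_succ_self))
      (fun k hk => ht_lt k (hk.trans n.lt_succ_self)) fun k hk => hF k (hk.trans n.lt_succ_self)
    have hcomp : ContractingWith c (F n ∘ (anchoredIter F t · n)) :=
      ⟨hprev.1, by simpa only [one_mul] using (hF n n.lt_succ_self).comp hprev.2⟩
    exact ⟨_, contractingWith_smul_add_smul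
      ⟨(ht n n.lt_succ_self).1, ht_lt n n.lt_succ_self (Nat.le_of_succ_le hmn)⟩ hcomp⟩

theorem recursive_flow_linear_convergence_general [CompleteSpace E] (hmN : m < N)
    (ht : ∀ n < N, t n ∈ Icc (0 : ℝ) 1) (ht_lt : ∀ n < N, m ≤ n → t n < 1)
    (hF : ∀ n < N, LipschitzWith 1 (F n)) (hFm : ContractingWith γ (F m))
    {G : E → E} (hG : ∀ x, G x = anchoredIter F t x N) :
    ∃ c : ℝ, 0 ≤ c ∧ c < 1 ∧
      (∀ x y, ‖G x - G y‖ ≤ c * ‖x - y‖) ∧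
      ∃ xstar : E, G xstar = xstar ∧
        (∀ y, G y = y → y = xstar) ∧
        ∀ x, ∀ k : ℕ, ‖G^[k] x - xstar‖ ≤ c ^ k * ‖x - xstar‖ := by
  obtain rfl : G = (anchoredIter F t · N) := funext hG
  obtain ⟨c, hc⟩ := exists_contractingWith_anchoredIter hmN ht ht_lt hF hFm
  simp only [← dist_eq_norm]
  exact ⟨c, c.2, hc.1, hc.dist_le_mul, hc.fixedPoint, hc.fixedPoint_isFixedPt,
    fun _ => hc.fixedPoint_unique, dist_iterate_le_of_isFixedPt hc.2 hc.fixedPoint_isFixedPt⟩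

end AnchoredIteration

theorem lipschitzWith_apply_add_const {𝕜 V W : Type*} [NontriviallyNormedField 𝕜]
    [SeminormedAddCommGroup V] [NormedSpace 𝕜 V] [SeminormedAddCommGroup W] [NormedSpace 𝕜 W]
    {γ : ℝ≥0} {A : V →L[𝕜] W} (hA : ‖A‖₊ ≤ γ) (w : W) : LipschitzWith γ fun x => A x + w := by
  simpa only [add_zero] using (A.lipschitz.weaken hA).add (LipschitzWith.const w)

theorem affIter_eq_anchoredIter {d : ℕ}
    (T : ℕ → EuclideanSpace ℂ (Fin d) →L[ℂ] EuclideanSpace ℂ (Fin d))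
    (b : ℕ → EuclideanSpace ℂ (Fin d)) (t : ℕ → ℝ) (x : EuclideanSpace ℂ (Fin d)) (n : ℕ) :
    affIter T b t x n = anchoredIter (fun i y => T i y + b i) t x n := by
  induction n with
  | zero => rfl
  | succ n ih => rw [affIter, anchoredIter, ih]

/-- **Linear convergence of the recursive iteration for affine inner-loop dynamics.**
If `‖T_n‖ ≤ γ < 1` and `t_i ∈ [0,1)`, then the outer-loop map `G : x ↦ x_N` is Lipschitz
with some constant `c < 1`; consequently `G` has a unique fixed point `x*` and the recursive
iterates satisfy `‖G^[k] x − x*‖ ≤ c^k ‖x − x*‖` for every `x` and every `k ≥ 0`. -/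
theorem recursive_flow_linear_convergence {d N : ℕ} (hN : 0 < N)
    (T : ℕ → EuclideanSpace ℂ (Fin d) →L[ℂ] EuclideanSpace ℂ (Fin d))
    (b : ℕ → EuclideanSpace ℂ (Fin d))
    (t : ℕ → ℝ) (ht : ∀ n < N, t n ∈ Set.Ico (0 : ℝ) 1)
    (γ : ℝ) (hγ : γ ∈ Set.Ico (0 : ℝ) 1) (hT : ∀ n < N, ‖T n‖ ≤ γ)
    (G : EuclideanSpace ℂ (Fin d) → EuclideanSpace ℂ (Fin d))
    (hG : ∀ x, G x = affIter T b t x N) :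
    ∃ c : ℝ, 0 ≤ c ∧ c < 1 ∧
      (∀ x y, ‖G x - G y‖ ≤ c * ‖x - y‖) ∧
      ∃ xstar : EuclideanSpace ℂ (Fin d), G xstar = xstar ∧
        (∀ y, G y = y → y = xstar) ∧
        ∀ x, ∀ k : ℕ, ‖G^[k] x - xstar‖ ≤ c ^ k * ‖x - xstar‖ := by
  lift γ to ℝ≥0 using hγ.1
  have hLip (n : ℕ) (hn : n < N) : LipschitzWith γ fun y => T n y + b n :=
    lipschitzWith_apply_add_const (hT n hn) (b n)
  exact recursive_flow_linear_convergence_general hN (fun n hn => Ico_subset_Icc_self (ht n hn))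
    (fun n hn _ => (ht n hn).2) (fun n hn => (hLip n hn).weaken hγ.2.le) ⟨hγ.2, hLip 0 hN⟩
    fun x => (hG x).trans (affIter_eq_anchoredIter T b t x N)
end
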